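/- For every h ∈ (0,1), every real-valued continuous bounded potential V, and every sufficiently regular L²(ℝ)-valued function Γ(t) of t ∈ ℝ, the FBI transform T_hΓ(z) = 2^{1/4} (2πh)^{−3/4} ∫_ℝ e^{−(z+t)²/(2h)} Γ(t) dt, defined for z = τ + is ∈ ℂ, satisfies the identity (∂_s + ∂ₓ² − V(x)) T_hΓ(z) = − T_h((i∂ₜ − ∂ₓ² + V(x))Γ)(z); in particular, if Γ solves the Schrödinger equation i∂ₜΓ − ∂ₓ²Γ + VΓ = 0 then W(z) = T_hΓ(z) solves the backward heat equation ∂_s W + ∂ₓ²W − V(x)W = 0 in the variable s. -/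

import Mathlib

/-!
The kernel `e^{-(z+t)²/(2h)}` enters only through being an entire function `k(z + t)` of `z + t`.
Holomorphy turns `∂ₛ` at `z = τ + is` into `i∂_z`, which on the kernel is `i∂ₜ`, and integrating by
parts in `t` moves it to `-i∂ₜ` on `Γ`. The operator `∂ₓ² - V(x)` does not see the kernel, so it
passes through the integral.
-/

open MeasureTheory Set

/-- The FBI transform `T_h Γ (z) = 2^{1/4} (2πh)^{-3/4} ∫_ℝ e^{-(z+t)²/(2h)} Γ(t) dt`
of an `L²(ℝ)`-valued function `Γ`, evaluated at `z = τ + is` and at the spatial point `x`. -/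
noncomputable def fbiTransform (h : ℝ) (Γ : ℝ → ℝ → ℂ) (τ s x : ℝ) : ℂ :=
  (((2 : ℝ) ^ ((1 : ℝ) / 4) / (2 * Real.pi * h) ^ ((3 : ℝ) / 4) : ℝ) : ℂ) *
    ∫ t : ℝ,
      Complex.exp (-(((τ : ℂ) + (s : ℂ) * Complex.I + (t : ℂ)) ^ 2) / (2 * (h : ℂ))) * Γ t x

section ParametricIntegral

variable {𝕜 E α : Type*} [RCLike 𝕜] [NormedAddCommGroup E] [NormedSpace ℝ E] [NormedSpace 𝕜 E]
  [TopologicalSpace α] [T2Space α] [MeasurableSpace α] [OpensMeasurableSpace α]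
  {μ : Measure α} [IsFiniteMeasureOnCompacts μ] {K : Set α} {F F' : 𝕜 → α → E}

theorem hasDerivAt_setIntegral_of_isCompact (hK : IsCompact K)
    (hF : ∀ p, ContinuousOn (F p) K) (hF' : ContinuousOn (Function.uncurry F') (univ ×ˢ K))
    (hderiv : ∀ p, ∀ t ∈ K, HasDerivAt (F · t) (F' p t) p) (p : 𝕜) :
    HasDerivAt (fun q ↦ ∫ t in K, F q t ∂μ) (∫ t in K, F' p t ∂μ) p := by
  have hKm : MeasurableSet K := hK.measurableSet
  obtain ⟨C, hC⟩ := ((isCompact_closedBall p 1).prod hK).exists_bound_of_continuousOn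
    (hF'.mono (prod_mono_left (subset_univ _)))
  have bound : ∀ᵐ t ∂μ.restrict K, ∀ q ∈ Metric.closedBall p 1, ‖F' q t‖ ≤ C :=
    ae_restrict_of_forall_mem hKm fun t ht q hq ↦ hC (q, t) ⟨hq, ht⟩
  have hF'p : ContinuousOn (F' p) K :=
    hF'.comp (Continuous.prodMk_right p).continuousOn fun t ht ↦ ⟨mem_univ p, ht⟩
  exact (hasDerivAt_integral_of_dominated_loc_of_deriv_le
    (Metric.closedBall_mem_nhds p one_pos)
    (.of_forall fun q ↦ (hF q).aestronglyMeasurable_of_isCompact hK hKm)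
    ((hF p).integrableOn_compact' hK hKm) (hF'p.aestronglyMeasurable_of_isCompact hK hKm)
    bound (integrableOn_const hK.measure_lt_top.ne)
    (ae_restrict_of_forall_mem hKm fun t ht q _ ↦ hderiv q t ht)).2

theorem hasDerivAt_integral_of_isCompact (hK : IsCompact K) (hF0 : ∀ p, ∀ t ∉ K, F p t = 0)
    (hF : ∀ p, ContinuousOn (F p) K) (hF' : ContinuousOn (Function.uncurry F') (univ ×ˢ K))
    (hderiv : ∀ p t, HasDerivAt (F · t) (F' p t) p) (p : 𝕜) :
    HasDerivAt (fun q ↦ ∫ t, F q t ∂μ) (∫ t, F' p t ∂μ) p := by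
  have hF'0 : ∀ t ∉ K, F' p t = 0 := fun t ht ↦
    (hderiv p t).unique (by simpa only [hF0 _ t ht] using hasDerivAt_const p 0)
  simpa only [setIntegral_eq_integral_of_forall_compl_eq_zero (hF0 _),
    setIntegral_eq_integral_of_forall_compl_eq_zero hF'0] using
    hasDerivAt_setIntegral_of_isCompact (μ := μ) hK hF hF' (fun q t _ ↦ hderiv q t) p

end ParametricIntegral

theorem contDiff_uncurry_deriv {𝕜 X E : Type*} [NontriviallyNormedField 𝕜]
    [NormedAddCommGroup X] [NormedSpace 𝕜 X] [NormedAddCommGroup E] [NormedSpace 𝕜 E]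
    {n : WithTop ℕ∞} {F : X → 𝕜 → E} (hF : ContDiff 𝕜 (n + 1) (Function.uncurry F)) :
    ContDiff 𝕜 n (Function.uncurry fun t x ↦ deriv (F t) x) :=
  (hF.comp (contDiff_fst.fst.prodMk contDiff_snd) :
    ContDiff 𝕜 (n + 1) (Function.uncurry fun p : X × 𝕜 ↦ F p.1)).fderiv_apply
    contDiff_snd contDiff_const le_rfl

/-- The transform `f ↦ ∫ k(z + t) f(t) dt` with kernel `k : ℂ → ℂ`, evaluated at `z`. For a
function `Γ` of time and space it acts in time, `kernelTransform k (Γ · x) z`, and the FBI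
transform is the case of a Gaussian kernel. -/
noncomputable def kernelTransform {E : Type*} [NormedAddCommGroup E] [NormedSpace ℂ E]
    (k : ℂ → ℂ) (f : ℝ → E) (z : ℂ) : E :=
  ∫ t : ℝ, k (z + t) • f t

namespace kernelTransform

variable {E : Type*} [NormedAddCommGroup E] [NormedSpace ℂ E] {k : ℂ → ℂ} {f g : ℝ → E}

theorem integrable (hk : Continuous k) (hf : Continuous f) (hfs : HasCompactSupport f) (z : ℂ) :
    Integrable fun t : ℝ ↦ k (z + t) • f t :=
  (by fun_prop : Continuous fun t : ℝ ↦ k (z + t) • f t).integrable_of_hasCompactSupport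
    hfs.smul_left

theorem const_smul (c : ℂ) (f : ℝ → E) (z : ℂ) :
    kernelTransform k (c • f) z = c • kernelTransform k f z := by
  simp only [kernelTransform, Pi.smul_apply, smul_comm _ c, integral_smul]

theorem add (hk : Continuous k) (hf : Continuous f) (hfs : HasCompactSupport f)
    (hg : Continuous g) (hgs : HasCompactSupport g) (z : ℂ) :
    kernelTransform k (f + g) z = kernelTransform k f z + kernelTransform k g z := by
  simp only [kernelTransform, Pi.add_apply, smul_add]
  exact integral_add (integrable hk hf hfs z) (integrable hk hg hgs z)

theorem sub (hk : Continuous k) (hf : Continuous f) (hfs : HasCompactSupport f)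
    (hg : Continuous g) (hgs : HasCompactSupport g) (z : ℂ) :
    kernelTransform k (f - g) z = kernelTransform k f z - kernelTransform k g z := by
  simp only [kernelTransform, Pi.sub_apply, smul_sub]
  exact integral_sub (integrable hk hf hfs z) (integrable hk hg hgs z)

theorem hasDerivAt (hk : Differentiable ℂ k) (hf : Continuous f) (hfs : HasCompactSupport f)
    (z : ℂ) : HasDerivAt (kernelTransform k f) (kernelTransform (deriv k) f z) z := by
  have hk' : Continuous (deriv k) := (hk.contDiff (n := 1)).continuous_deriv le_rfl
  have hderiv (w : ℂ) (t : ℝ) :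
      HasDerivAt (fun w ↦ k (w + t) • f t) (deriv k (w + t) • f t) w :=
    ((hk (w + t)).hasDerivAt.comp_add_const w (t : ℂ)).smul_const (f t)
  exact hasDerivAt_integral_of_isCompact hfs.isCompact
    (fun w t ht ↦ by rw [image_eq_zero_of_notMem_tsupport ht, smul_zero])
    (fun w ↦ by have := hk.continuous; fun_prop)
    (by unfold Function.uncurry; fun_prop) hderiv z

theorem deriv_right (hk : Differentiable ℂ k) (hf : ContDiff ℝ 1 f) (hfs : HasCompactSupport f)
    (z : ℂ) : kernelTransform k (deriv f) z = -kernelTransform (deriv k) f z := by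
  have hk' : Continuous (deriv k) := (hk.contDiff (n := 1)).continuous_deriv le_rfl
  refine integral_bilinear_hasDerivAt_right_eq_neg_left_of_integrable
    (L := ContinuousLinearMap.lsmul ℝ ℂ) (fun t _ ↦ ?_)
    (fun t _ ↦ (hf.differentiable one_ne_zero t).hasDerivAt)
    (integrable hk.continuous (hf.continuous_deriv le_rfl) hfs.deriv z)
    (integrable hk' hf.continuous hfs z) (integrable hk.continuous hf.continuous hfs z)
  exact ((hk (z + t)).hasDerivAt.comp_const_add z (t : ℂ)).comp_ofReal

theorem hasDerivAt_vertical (hk : Differentiable ℂ k) (hf : ContDiff ℝ 1 f)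
    (hfs : HasCompactSupport f) (τ s : ℝ) :
    HasDerivAt (fun s' : ℝ ↦ kernelTransform k f (τ + s' * Complex.I))
      (-(Complex.I • kernelTransform k (deriv f) (τ + s * Complex.I))) s := by
  have line : HasDerivAt (fun s' : ℝ ↦ (τ + s' * Complex.I : ℂ)) Complex.I s := by
    simpa using ((Complex.ofRealCLM.hasDerivAt (x := s)).mul_const Complex.I).const_add (τ : ℂ)
  rw [deriv_right hk hf hfs, smul_neg, neg_neg]
  exact (hasDerivAt hk hf.continuous hfs _).scomp s line

theorem hasDerivAt_param (hk : Continuous k) {F : ℝ → ℝ → E}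
    (hF : ContDiff ℝ 1 (Function.uncurry F)) {K : Set ℝ} (hK : IsCompact K)
    (hF0 : ∀ t ∉ K, F t = 0) (z : ℂ) (x : ℝ) :
    HasDerivAt (fun y ↦ kernelTransform k (F · y) z)
      (kernelTransform k (fun t ↦ deriv (F t) x) z) x := by
  have hkz : Continuous fun t : ℝ ↦ k (z + t) := by fun_prop
  have hF' : Continuous (Function.uncurry fun t y ↦ deriv (F t) y) :=
    (contDiff_uncurry_deriv (n := 0) (by simpa using hF)).continuous
  have hcont : Continuous (Function.uncurry fun (y t : ℝ) ↦ k (z + t) • deriv (F t) y) :=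
    (hkz.comp continuous_snd).smul (hF'.comp continuous_swap)
  have hderiv (y t : ℝ) :
      HasDerivAt (fun y ↦ k (z + t) • F t y) (k (z + t) • deriv (F t) y) y := by
    have hFt : ContDiff ℝ 1 (F t) := hF.comp (contDiff_const.prodMk contDiff_id)
    exact (hFt.differentiable one_ne_zero y).hasDerivAt.const_smul (k (z + t))
  exact hasDerivAt_integral_of_isCompact hK (fun y t ht ↦ by simp [hF0 t ht])
    (fun y ↦ (hkz.smul (hF.continuous.uncurry_right y)).continuousOn)
    hcont.continuousOn hderiv x

theorem deriv_deriv_param (hk : Continuous k) {F : ℝ → ℝ → E}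
    (hF : ContDiff ℝ 2 (Function.uncurry F)) {K : Set ℝ} (hK : IsCompact K)
    (hF0 : ∀ t ∉ K, F t = 0) (z : ℂ) (x : ℝ) :
    deriv (deriv fun y ↦ kernelTransform k (F · y) z) x =
      kernelTransform k (fun t ↦ deriv (deriv (F t)) x) z := by
  have hF' : ContDiff ℝ 1 (Function.uncurry fun t x ↦ deriv (F t) x) :=
    contDiff_uncurry_deriv (by simpa [one_add_one_eq_two] using hF)
  have hF'0 : ∀ t ∉ K, deriv (F t) = 0 := fun t ht ↦ by simp [hF0 t ht]
  rw [funext fun y ↦ (hasDerivAt_param hk (hF.of_le one_le_two) hK hF0 z y).deriv]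
  exact (hasDerivAt_param hk hF' hK hF'0 z x).deriv

end kernelTransform

theorem fbi_transform_heat_schrodinger_general {E : Type*} [NormedAddCommGroup E]
    [NormedSpace ℂ E] {k : ℂ → ℂ} (hk : Differentiable ℂ k) (V : ℝ → ℂ) {Γ : ℝ → ℝ → E}
    (hΓ : ContDiff ℝ 2 (Function.uncurry Γ)) {K : Set ℝ} (hK : IsCompact K)
    (hΓ0 : ∀ t ∉ K, Γ t = 0) :
    (∀ τ s x : ℝ,
      deriv (fun s' : ℝ ↦ kernelTransform k (Γ · x) (τ + s' * Complex.I)) s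
        + deriv (deriv fun x' ↦ kernelTransform k (Γ · x') (τ + s * Complex.I)) x
        - V x • kernelTransform k (Γ · x) (τ + s * Complex.I)
      = -kernelTransform k (fun t ↦ Complex.I • deriv (Γ · x) t
          - deriv (deriv (Γ t)) x + V x • Γ t x) (τ + s * Complex.I)) ∧
    ((∀ t x : ℝ, Complex.I • deriv (Γ · x) t - deriv (deriv (Γ t)) x + V x • Γ t x = 0) →
      ∀ τ s x : ℝ,
        deriv (fun s' : ℝ ↦ kernelTransform k (Γ · x) (τ + s' * Complex.I)) s
          + deriv (deriv fun x' ↦ kernelTransform k (Γ · x') (τ + s * Complex.I)) x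
          - V x • kernelTransform k (Γ · x) (τ + s * Complex.I) = 0) := by
  refine (and_iff_left_of_imp fun intertwine schrodinger τ s x ↦ ?_).mpr fun τ s x ↦ ?_
  · rw [intertwine]
    simp [schrodinger, kernelTransform]
  have hΓt : ContDiff ℝ 2 (Γ · x) := hΓ.comp (contDiff_id.prodMk contDiff_const)
  have hΓs : HasCompactSupport (Γ · x) := .intro hK fun t ht ↦ by simp [hΓ0 t ht]
  have hΓt' : Continuous (deriv (Γ · x)) := hΓt.continuous_deriv one_le_two
  have hΓxx : Continuous fun t ↦ deriv (deriv (Γ t)) x :=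
    (contDiff_uncurry_deriv (n := 0) (contDiff_uncurry_deriv (n := 1)
      (by simpa [one_add_one_eq_two] using hΓ))).continuous.uncurry_right x
  have hΓxxs : HasCompactSupport fun t ↦ deriv (deriv (Γ t)) x :=
    .intro hK fun t ht ↦ by simp [hΓ0 t ht]
  have expand (z : ℂ) :
      kernelTransform k (fun t ↦ Complex.I • deriv (Γ · x) t - deriv (deriv (Γ t)) x
        + V x • Γ t x) z =
      Complex.I • kernelTransform k (deriv (Γ · x)) z
        - kernelTransform k (fun t ↦ deriv (deriv (Γ t)) x) z
        + V x • kernelTransform k (Γ · x) z := by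
    rw [← kernelTransform.const_smul, ← kernelTransform.const_smul,
      ← kernelTransform.sub hk.continuous (hΓt'.const_smul _) hΓs.deriv.smul_left hΓxx hΓxxs,
      ← kernelTransform.add hk.continuous ((hΓt'.const_smul _).sub hΓxx)
        (hΓs.deriv.smul_left.sub hΓxxs) (hΓt.continuous.const_smul _) hΓs.smul_left]
    rfl
  rw [expand, (kernelTransform.hasDerivAt_vertical hk (hΓt.of_le one_le_two) hΓs τ s).deriv,
    kernelTransform.deriv_deriv_param hk.continuous hΓ hK hΓ0]
  abel

/-- The kernel `w ↦ 2^{1/4} (2πh)^{-3/4} e^{-w²/(2h)}` of the FBI transform, including its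
normalizing constant. -/
noncomputable def fbiKernel (h : ℝ) (w : ℂ) : ℂ :=
  (((2 : ℝ) ^ ((1 : ℝ) / 4) / (2 * Real.pi * h) ^ ((3 : ℝ) / 4) : ℝ) : ℂ) *
    Complex.exp (-(w ^ 2) / (2 * (h : ℂ)))

theorem differentiable_fbiKernel (h : ℝ) : Differentiable ℂ (fbiKernel h) := by
  unfold fbiKernel
  fun_prop

theorem fbiTransform_eq_kernelTransform (h : ℝ) (Γ : ℝ → ℝ → ℂ) (τ s x : ℝ) :
    fbiTransform h Γ τ s x = kernelTransform (fbiKernel h) (Γ · x) (τ + s * Complex.I) := by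
  simp only [fbiTransform, kernelTransform, fbiKernel, smul_eq_mul, mul_assoc, integral_const_mul]

/-- **The FBI transform intertwines the Schrödinger and backward heat operators.**
For `h ∈ (0,1)`, a real-valued continuous bounded potential `V`, and a sufficiently
regular `L²(ℝ)`-valued `Γ(t)` (here: `C²` jointly and compactly supported in `t`),
`(∂_s + ∂ₓ² - V(x)) T_hΓ(z) = -T_h((i∂ₜ - ∂ₓ² + V(x))Γ)(z)` for `z = τ + is`;
in particular, if `Γ` solves `i∂ₜΓ - ∂ₓ²Γ + VΓ = 0`, then `W = T_hΓ` solves the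
backward heat equation `∂_s W + ∂ₓ²W - V(x)W = 0` in `s`. -/
theorem fbi_transform_heat_schrodinger
    (h : ℝ) (hh0 : 0 < h) (hh1 : h < 1)
    (V : ℝ → ℝ) (hVcont : Continuous V) (hVbdd : ∃ M : ℝ, ∀ x : ℝ, |V x| ≤ M)
    (Γ : ℝ → ℝ → ℂ) (hΓreg : ContDiff ℝ 2 (Function.uncurry Γ))
    (hΓsupp : ∃ R : ℝ, ∀ t x : ℝ, R < |t| → Γ t x = 0) :
    (∀ τ s x : ℝ,
      deriv (fun s' => fbiTransform h Γ τ s' x) s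
        + deriv (deriv (fun x' => fbiTransform h Γ τ s x')) x
        - (V x : ℂ) * fbiTransform h Γ τ s x
      = -(fbiTransform h
          (fun t y => Complex.I * deriv (fun t' => Γ t' y) t
            - deriv (deriv (Γ t)) y + (V y : ℂ) * Γ t y) τ s x)) ∧
    ((∀ t x : ℝ, Complex.I * deriv (fun t' => Γ t' x) t
        - deriv (deriv (Γ t)) x + (V x : ℂ) * Γ t x = 0) →
      ∀ τ s x : ℝ,
        deriv (fun s' => fbiTransform h Γ τ s' x) s
          + deriv (deriv (fun x' => fbiTransform h Γ τ s x')) x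
          - (V x : ℂ) * fbiTransform h Γ τ s x = 0) := by
  obtain ⟨R, hR⟩ := hΓsupp
  simpa only [fbiTransform_eq_kernelTransform, smul_eq_mul] using
    fbi_transform_heat_schrodinger_general (differentiable_fbiKernel h) (fun x ↦ (V x : ℂ)) hΓreg
      (isCompact_closedBall 0 R) fun t ht ↦ funext fun x ↦ hR t x (by simpa using ht)
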